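/- Let k''/k be a finite Galois extension with Galois group G = Gal(k''/k), acting entrywise on matrices over k''. If a map σ ↦ M_σ from G to GL₂(k'') satisfies the cocycle relation M_{σ∘τ} = σ(M_τ)·M_σ for all σ, τ ∈ G, then there exists A ∈ GL₂(k'') such that M_σ = σ(A)⁻¹·A for all σ ∈ G (equivalently, σ(A) = A·M_σ⁻¹ for all σ ∈ G). -/

import Mathlib

/-!
For a vector `v` the twisted trace `∑ τ, τ(v) · M_τ` is fixed by the twisted action
`w ↦ σ(w) · M_σ`, because the cocycle relation turns the action of `σ` into a reindexing of the sum.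
A linear form vanishing on all twisted traces gives a linear relation among the elements of `G`,
regarded as characters of `K`; by Dedekind it is zero. Hence the twisted traces span `Kⁿ`, and a
matrix `A` whose rows form a basis of twisted traces is invertible and satisfies
`σ(A) · M_σ = A`.
-/

open Matrix

theorem exists_linearIndependent_comp_of_span_range_eq_top {ι n K V : Type*} [DivisionRing K]
    [AddCommGroup V] [Module K V] (b : Module.Basis n K V) {f : ι → V}
    (hf : Submodule.span K (Set.range f) = ⊤) : ∃ v : n → ι, LinearIndependent K (f ∘ v) := by
  obtain ⟨κ, a, -, hspan, hli⟩ := exists_linearIndependent' K f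
  let e : n ≃ κ := b.indexEquiv (.mk hli (hspan.trans hf).ge)
  exact ⟨a ∘ e, hli.comp e e.injective⟩

theorem span_range_eq_top_of_dotProduct_eq_zero {ι n K : Type*} [Fintype n] [Field K]
    {f : ι → n → K} (h : ∀ u : n → K, (∀ i, f i ⬝ᵥ u = 0) → u = 0) :
    Submodule.span K (Set.range f) = ⊤ := by
  classical
  refine Submodule.dualAnnihilator_eq_bot_iff.mp ((Submodule.eq_bot_iff _).mpr fun φ hφ ↦ ?_)
  obtain ⟨u, rfl⟩ := (dotProductEquiv K n).surjective φ
  have hu : ∀ i, f i ⬝ᵥ u = 0 := fun i ↦ by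
    rw [dotProduct_comm]
    exact (Submodule.mem_dualAnnihilator _).mp hφ (f i) (Submodule.subset_span ⟨i, rfl⟩)
  rw [h u hu, map_zero]

theorem eq_inv_mul_and_eq_mul_inv_of_mul_eq {n R : Type*} [Fintype n] [DecidableEq n] [CommRing R]
    {A B C : Matrix n n R} (hA : IsUnit A.det) (h : C * B = A) : B = C⁻¹ * A ∧ C = A * B⁻¹ := by
  subst h
  rw [det_mul, IsUnit.mul_iff] at hA
  exact ⟨(nonsing_inv_mul_cancel_left C B hA.1).symm, (mul_nonsing_inv_cancel_right B C hA.2).symm⟩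

theorem linearIndependent_smul_of_faithfulSMul (G K : Type*) [Monoid G] [CommRing K] [IsDomain K]
    [MulSemiringAction G K] [FaithfulSMul G K] :
    LinearIndependent K (fun (σ : G) (x : K) ↦ σ • x) :=
  (linearIndependent_monoidHom K K).comp
    (fun σ : G ↦ (MulSemiringAction.toRingHom G K σ : K →* K))
    fun _ _ h ↦ eq_of_smul_eq_smul fun x ↦ DFunLike.congr_fun h x

theorem smul_vecMul_eq_vecMul_map {G R m n : Type*} [Monoid G] [Semiring R] [MulSemiringAction G R]
    [Fintype m] (σ : G) (v : m → R) (A : Matrix m n R) :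
    σ • (v ᵥ* A) = (σ • v) ᵥ* A.map (σ • ·) :=
  funext fun i ↦ (MulSemiringAction.toRingHom G R σ).map_vecMul A v i

/-- The sum `∑ τ, τ(v) · M_τ`, i.e. the trace of the row vector `v` for the action of `G` on `Kⁿ`
twisted by the cocycle `M`; for `n = 1` this is the resolvent sum in the classical proof of
Hilbert's Theorem 90. -/
def twistedTrace {G R n : Type*} [Fintype G] [NonUnitalNonAssocSemiring R] [SMul G R] [Fintype n]
    (M : G → Matrix n n R) (v : n → R) : n → R :=
  ∑ τ, (τ • v) ᵥ* M τ

theorem smul_twistedTrace_vecMul {G R n : Type*} [Group G] [Fintype G] [Semiring R]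
    [MulSemiringAction G R] [Fintype n] {M : G → Matrix n n R}
    (hM : ∀ σ τ, M (σ * τ) = (M τ).map (σ • ·) * M σ) (σ : G) (v : n → R) :
    (σ • twistedTrace M v) ᵥ* M σ = twistedTrace M v := calc
  (σ • twistedTrace M v) ᵥ* M σ = ∑ τ, ((σ * τ) • v) ᵥ* M (σ * τ) := by
    simp only [twistedTrace, Finset.smul_sum, smul_vecMul_eq_vecMul_map, sum_vecMul, vecMul_vecMul,
      hM, mul_smul]
  _ = twistedTrace M v := Equiv.sum_comp (Equiv.mulLeft σ) fun τ ↦ (τ • v) ᵥ* M τ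

theorem twistedTrace_single_dotProduct {G R n : Type*} [Monoid G] [Fintype G]
    [NonUnitalSemiring R] [DistribMulAction G R] [Fintype n] [DecidableEq n] (M : G → Matrix n n R)
    (i : n) (c : R) (u : n → R) :
    twistedTrace M (Pi.single i c) ⬝ᵥ u = ∑ τ, τ • c * (M τ *ᵥ u) i := by
  simp only [twistedTrace, sum_dotProduct, ← dotProduct_mulVec, ← Pi.single_smul,
    single_dotProduct]

theorem mulVec_eq_zero_of_twistedTrace_dotProduct_eq_zero {G K n : Type*} [Monoid G] [Fintype G]
    [CommRing K] [IsDomain K] [MulSemiringAction G K] [FaithfulSMul G K] [Fintype n]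
    {M : G → Matrix n n K} {u : n → K} (h : ∀ v, twistedTrace M v ⬝ᵥ u = 0) (σ : G) :
    M σ *ᵥ u = 0 := by
  classical
  ext i
  have relation : ∑ τ, (M τ *ᵥ u) i • (fun x : K ↦ τ • x) = 0 := by
    ext c
    simpa [twistedTrace_single_dotProduct, mul_comm] using h (Pi.single i c)
  exact Fintype.linearIndependent_iff.mp (linearIndependent_smul_of_faithfulSMul G K) _ relation σ

theorem span_range_twistedTrace_eq_top {G K n : Type*} [Monoid G] [Fintype G] [Field K]
    [MulSemiringAction G K] [FaithfulSMul G K] [Fintype n] [DecidableEq n]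
    {M : G → Matrix n n K} {σ : G} (hσ : IsUnit (M σ).det) :
    Submodule.span K (Set.range (twistedTrace M)) = ⊤ :=
  span_range_eq_top_of_dotProduct_eq_zero fun _ hu ↦
    eq_zero_of_mulVec_eq_zero hσ.ne_zero (mulVec_eq_zero_of_twistedTrace_dotProduct_eq_zero hu σ)

theorem statement13_general {G K n : Type*} [Group G] [Finite G] [Field K] [MulSemiringAction G K]
    [FaithfulSMul G K] [Fintype n] [DecidableEq n] (M : G → Matrix n n K)
    (hM : IsUnit (M 1).det) (hcoc : ∀ σ τ, M (σ * τ) = (M τ).map (σ • ·) * M σ) :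
    ∃ A : Matrix n n K, IsUnit A.det ∧
      ∀ σ : G, M σ = (A.map (σ • ·))⁻¹ * A ∧ A.map (σ • ·) = A * (M σ)⁻¹ := by
  cases nonempty_fintype G
  obtain ⟨v, hv⟩ := exists_linearIndependent_comp_of_span_range_eq_top (Pi.basisFun K n)
    (span_range_twistedTrace_eq_top hM)
  let A : Matrix n n K := .of (twistedTrace M ∘ v)
  have hA : IsUnit A.det := A.isUnit_iff_isUnit_det.mp (linearIndependent_rows_iff_isUnit.mp hv)
  have map_mul_eq (σ : G) : A.map (σ • ·) * M σ = A :=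
    funext fun i ↦ smul_twistedTrace_vecMul hcoc σ (v i)
  exact ⟨A, hA, fun σ ↦ eq_inv_mul_and_eq_mul_inv_of_mul_eq hA (map_mul_eq σ)⟩

/-- Hilbert 90 for `GL₂`: if `k''/k` is a finite Galois extension and `σ ↦ M_σ` is a map
from `Gal(k''/k)` to `GL₂(k'')` satisfying the cocycle relation
`M_{σ∘τ} = σ(M_τ)·M_σ` (where the Galois group acts entrywise on matrices), then there
exists `A ∈ GL₂(k'')` with `M_σ = σ(A)⁻¹·A` (equivalently `σ(A) = A·M_σ⁻¹`) for all `σ`. -/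
theorem statement13 {k K : Type*} [Field k] [Field K] [Algebra k K]
    [FiniteDimensional k K] [IsGalois k K]
    (M : (K ≃ₐ[k] K) → Matrix (Fin 2) (Fin 2) K)
    (hM : ∀ σ : K ≃ₐ[k] K, IsUnit (M σ).det)
    (hcoc : ∀ σ τ : K ≃ₐ[k] K, M (σ * τ) = (M τ).map ⇑σ * M σ) :
    ∃ A : Matrix (Fin 2) (Fin 2) K, IsUnit A.det ∧
      ∀ σ : K ≃ₐ[k] K, M σ = (A.map ⇑σ)⁻¹ * A ∧ A.map ⇑σ = A * (M σ)⁻¹ :=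
  statement13_general M (hM 1) hcoc
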